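/- For the edge ideal I = I(G_{n,r}), the Castelnuovo–Mumford regularity of the t-th symbolic power equals that of the t-th ordinary power: reg I^{(t)} = reg I^t for all t ≥ 1. -/

import Mathlib

open MvPolynomial

/-- The graph `G_{n,r}`: vertices `x_1,…,x_n` in cyclic order (indexed by `ZMod n`),
where for `i < j` the vertices `x_i, x_j` are adjacent iff `r+1 ≤ j-i ≤ n-(r+1)`. -/
def Gnr (n r : ℕ) : SimpleGraph (ZMod n) :=
  SimpleGraph.fromRel (fun i j => r + 1 ≤ j.val - i.val ∧ j.val - i.val ≤ n - (r + 1))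

/-- A vertex cover (as a finite set of vertices): meets every edge. -/
def IsVertexCover {V : Type*} (G : SimpleGraph V) (C : Finset V) : Prop :=
  ∀ ⦃a b : V⦄, G.Adj a b → a ∈ C ∨ b ∈ C

/-- A minimal vertex cover. -/
def IsMinVertexCover {V : Type*} (G : SimpleGraph V) (C : Finset V) : Prop :=
  IsVertexCover G C ∧ ∀ D ⊆ C, IsVertexCover G D → D = C

/-- The edge ideal `I(G) = (x_i x_j : {x_i,x_j} ∈ E(G))` of a graph. -/
noncomputable def edgeIdeal (k : Type*) [Field k] {V : Type*} (G : SimpleGraph V) :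
    Ideal (MvPolynomial V k) :=
  Ideal.span {p | ∃ i j : V, G.Adj i j ∧ p = X i * X j}

/-- The monomial prime ideal generated by the variables of a vertex set `C`. -/
noncomputable def coverPrime (k : Type*) [Field k] {V : Type*} (C : Finset V) :
    Ideal (MvPolynomial V k) :=
  Ideal.span ((fun i => (X i : MvPolynomial V k)) '' ↑C)

/-- The `t`-th symbolic power of the edge ideal of `G`: the intersection of the `t`-th
powers of the monomial primes corresponding to the minimal vertex covers of `G`. -/
noncomputable def symbPow (k : Type*) [Field k] {V : Type*} (G : SimpleGraph V) (t : ℕ) :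
    Ideal (MvPolynomial V k) :=
  ⨅ (C : Finset V) (_ : IsMinVertexCover G C), (coverPrime k C) ^ t

/-- The degree-`m` graded piece of an ideal of the polynomial ring. -/
noncomputable def gradedPiece {k : Type*} [Field k] {σ : Type*}
    (J : Ideal (MvPolynomial σ k)) (m : ℕ) : Submodule k (MvPolynomial σ k) :=
  Submodule.restrictScalars k J ⊓ homogeneousSubmodule σ k m

/-- `J` is `m`-regular, via the Bayer–Stillman criterion: `J` is generated in degrees
`≤ m`, and there are linear forms `h_1,…,h_ℓ` with
`((J,h_1,…,h_{i-1}) : h_i)_m = (J,h_1,…,h_{i-1})_m` for each `i` and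
`(J,h_1,…,h_ℓ)_m = R_m`.  This characterizes `reg J ≤ m`. -/
def IsMRegular {k : Type*} [Field k] {σ : Type*}
    (J : Ideal (MvPolynomial σ k)) (m : ℕ) : Prop :=
  Ideal.span {p | p ∈ J ∧ p.totalDegree ≤ m} = J ∧
  ∃ (ℓ : ℕ) (h : Fin ℓ → MvPolynomial σ k),
    (∀ i, h i ∈ homogeneousSubmodule σ k 1) ∧
    (∀ i : Fin ℓ,
      gradedPiece (Submodule.colon
          (J ⊔ Ideal.span (h '' {x | x < i})) (Ideal.span {h i})) m =
        gradedPiece (J ⊔ Ideal.span (h '' {x | x < i})) m) ∧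
    gradedPiece (J ⊔ Ideal.span (Set.range h)) m = gradedPiece ⊤ m

/-- The Castelnuovo–Mumford regularity of a homogeneous ideal: the least `m` for which
`J` is `m`-regular. -/
noncomputable def reg {k : Type*} [Field k] {σ : Type*} (J : Ideal (MvPolynomial σ k)) : ℕ :=
  sInf {m : ℕ | IsMRegular J m}


lemma tutte_cover {W : Type*} [Fintype W] [DecidableEq W] (H : SimpleGraph W)
    (heven : Even (Fintype.card W))
    (hP : ∀ v : W, ∃ f : W → Bool, ∀ w w', w ≠ v → w' ≠ v → ¬ H.Adj v w → ¬ H.Adj v w' →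
      f w = f w' → ¬ H.Adj w w')
    (hcov : ∀ C : Finset W, (∀ a b, H.Adj a b → a ∈ C ∨ b ∈ C) → Fintype.card W ≤ 2 * C.card) :
    ∃ M : H.Subgraph, M.IsPerfectMatching := by
  classical
  rw [SimpleGraph.tutte]
  intro U hU
  unfold SimpleGraph.IsTutteViolator at hU
  set S := (⊤ : H.Subgraph).deleteVerts U with hS
  set D := S.coe with hD
  have hverts : ∀ w, w ∈ S.verts ↔ w ∉ U := by intro w; simp [hS]
  have hcardD : Fintype.card S.verts + U.ncard = Fintype.card W := by
    have h1 : S.verts = Uᶜ := by ext w; simp [hverts]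
    have h2 := Set.ncard_add_ncard_compl U
    rw [← h1, ← Nat.card_coe_set_eq S.verts, Nat.card_eq_fintype_card,
      Nat.card_eq_fintype_card] at h2
    omega
  have hpar := D.odd_ncard_oddComponents
  rw [Nat.card_eq_fintype_card] at hpar
  have hodd2 : U.ncard + 2 ≤ D.oddComponents.ncard := by
    by_contra hlt
    have : D.oddComponents.ncard = U.ncard + 1 := by omega
    rw [this] at hpar
    rcases Nat.even_or_odd U.ncard with h | h
    · have h1 := hpar.1 h.add_one
      have := h1.add_even h
      rw [hcardD] at this
      exact (Nat.not_odd_iff_even.2 heven) this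
    · have h0 : ¬ Odd (U.ncard + 1) := by
        rw [Nat.not_odd_iff_even]; exact h.add_one
      have h1 : Even (Fintype.card S.verts) := by
        rw [← Nat.not_odd_iff_even]; exact fun h' => h0 (hpar.2 h')
      have := h1.add_odd h
      rw [hcardD] at this
      exact (Nat.not_odd_iff_even.2 heven) this
  have hother : ∀ c : D.ConnectedComponent, ∃ c', c' ≠ c := by
    intro c
    have : 1 < D.oddComponents.ncard := by omega
    obtain ⟨x, _, y, _, hxy⟩ := (Set.one_lt_ncard (Set.toFinite _)).1 this
    by_cases h : x = c
    · exact ⟨y, fun h' => hxy (h.trans h'.symm)⟩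
    · exact ⟨x, h⟩
  have hf : ∀ c : D.ConnectedComponent, ∃ f : W → Bool, ∀ w w' : S.verts,
      D.connectedComponentMk w = c → D.connectedComponentMk w' = c → f w = f w' →
      ¬ H.Adj w w' := by
    intro c
    obtain ⟨c', hc'⟩ := hother c
    obtain ⟨v, rfl⟩ := c'.exists_rep
    obtain ⟨f, hf⟩ := hP v.1
    have key : ∀ w : S.verts, D.connectedComponentMk w = c → w.1 ≠ v.1 ∧ ¬ H.Adj v.1 w.1 := by
      intro w hw
      refine ⟨fun h => hc' ?_, fun h => hc' ?_⟩
      · rw [← hw, Subtype.ext h]; rfl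
      · rw [← hw]
        have : D.Adj v w := by
          have h1 := (hverts v).1 v.2
          have h2 := (hverts w).1 w.2
          simp [hD, hS, h, h1, h2]
        exact SimpleGraph.ConnectedComponent.sound this.reachable
    refine ⟨f, fun w w' hw hw' he => hf w w' (key w hw).1 (key w' hw').1 (key w hw).2
      (key w' hw').2 he⟩
  choose f hf using hf
  have hb : ∀ c : D.ConnectedComponent, ∃ b : Bool,
      2 * (Finset.univ.filter (fun w : S.verts => D.connectedComponentMk w = c ∧ f c w = b)).card
        + (if c ∈ D.oddComponents then 1 else 0) ≤
      (Finset.univ.filter (fun w : S.verts => D.connectedComponentMk w = c)).card := by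
    intro c
    have h1 : c.supp.ncard =
        (Finset.univ.filter (fun w : S.verts => D.connectedComponentMk w = c)).card := by
      rw [← Set.ncard_coe_finset]; congr 1; ext w; simp
    have h2 := Finset.card_filter_add_card_filter_not
      (s := Finset.univ.filter (fun w : S.verts => D.connectedComponentMk w = c))
      (fun w => f c w = true)
    simp only [Finset.filter_filter, Bool.not_eq_true] at h2
    by_contra hcon
    push Not at hcon
    have ht := hcon true
    have hff := hcon false
    split_ifs at ht hff with ho
    · have : Odd c.supp.ncard := ho
      obtain ⟨j, hj⟩ := this
      omega
    · omega
  choose b hb using hb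
  set K := Finset.univ.filter (fun w : S.verts =>
    f (D.connectedComponentMk w) w = b (D.connectedComponentMk w)) with hK
  have hKc : 2 * K.card + D.oddComponents.ncard ≤ Fintype.card S.verts := by
    have e1 : K.card = ∑ c : D.ConnectedComponent, (Finset.univ.filter (fun w : S.verts =>
        D.connectedComponentMk w = c ∧ f c w = b c)).card := by
      rw [Finset.card_eq_sum_card_fiberwise (f := fun w => D.connectedComponentMk w)
        (t := Finset.univ) (by intro x _; simp)]
      refine Finset.sum_congr rfl fun c _ => ?_
      congr 1
      ext w
      simp only [hK, Finset.mem_filter, Finset.mem_univ, true_and]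
      constructor
      · rintro ⟨h1, h2⟩; subst h2; exact ⟨rfl, h1⟩
      · rintro ⟨h1, h2⟩; subst h1; exact ⟨h2, rfl⟩
    have e2 : Fintype.card S.verts = ∑ c : D.ConnectedComponent,
        (Finset.univ.filter (fun w : S.verts => D.connectedComponentMk w = c)).card := by
      rw [← Finset.card_univ, Finset.card_eq_sum_card_fiberwise
        (f := fun w => D.connectedComponentMk w) (t := Finset.univ) (by intro x _; simp)]
    have e3 : D.oddComponents.ncard = ∑ c : D.ConnectedComponent,
        (if c ∈ D.oddComponents then 1 else 0) := by
      rw [Finset.sum_boole, Nat.cast_id, ← Set.ncard_coe_finset]; congr 1; ext w; simp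
    rw [e1, e2, e3, Finset.mul_sum, ← Finset.sum_add_distrib]
    exact Finset.sum_le_sum fun c _ => hb c
  have := hcov (U.toFinset ∪ K.map (Function.Embedding.subtype _)) (by
    intro x y hxy
    by_contra hcon
    simp only [Finset.mem_union, Set.mem_toFinset, not_or] at hcon
    obtain ⟨⟨hx, hx'⟩, hy, hy'⟩ := hcon
    let x' : S.verts := ⟨x, (hverts x).2 hx⟩
    let y' : S.verts := ⟨y, (hverts y).2 hy⟩
    have hx'' : x' ∉ K := fun h => hx' (Finset.mem_map.2 ⟨x', h, rfl⟩)
    have hy'' : y' ∉ K := fun h => hy' (Finset.mem_map.2 ⟨y', h, rfl⟩)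
    have hadj : D.Adj x' y' := by simp [hD, hS, x', y', hxy, hx, hy]
    have hc : D.connectedComponentMk y' = D.connectedComponentMk x' :=
      SimpleGraph.ConnectedComponent.sound hadj.reachable.symm
    simp only [hK, Finset.mem_filter, Finset.mem_univ, true_and] at hx'' hy''
    rw [hc] at hy''
    refine hf _ x' y' rfl hc ?_ hxy
    revert hx'' hy''
    generalize f _ _ = p
    generalize f _ _ = q
    generalize b _ = r
    revert p q r
    decide)
  have h3 := Finset.card_union_le U.toFinset (K.map (Function.Embedding.subtype _))
  rw [Finset.card_map, ← Set.ncard_eq_toFinset_card'] at h3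
  omega

lemma prod_mem_of_involution {W R : Type*} [DecidableEq W] [CommRing R] (y : W → R)
    (isU : W → Prop) [DecidablePred isU] (I : Ideal R) (σ : W → W) (hσ : ∀ w, σ (σ w) = w)
    (hne : ∀ w, σ w ≠ w) (hI : ∀ w, ¬ isU w → ¬ isU (σ w) → y w * y (σ w) ∈ I) :
    ∀ (N : ℕ) (S : Finset W), S.card = N → (∀ w ∈ S, σ w ∈ S) → ∀ s,
      2 * s + 2 * (S.filter isU).card ≤ S.card → ∏ w ∈ S, y w ∈ I ^ s := by
  intro N
  induction N using Nat.strong_induction_on with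
  | _ N ih =>
  intro S hS hcl s hs
  rcases S.eq_empty_or_nonempty with rfl | ⟨v, hv⟩
  · simp at hs; subst hs; simp
  have hv' : σ v ∈ S.erase v := Finset.mem_erase.2 ⟨hne v, hcl v hv⟩
  have hp : ∏ w ∈ S, y w = (y v * y (σ v)) * ∏ w ∈ (S.erase v).erase (σ v), y w := by
    rw [mul_assoc, Finset.mul_prod_erase _ _ hv', Finset.mul_prod_erase _ _ hv]
  have hc1 := Finset.card_erase_add_one hv
  have hc2 := Finset.card_erase_add_one hv'
  have hcl' : ∀ w ∈ (S.erase v).erase (σ v), σ w ∈ (S.erase v).erase (σ v) := by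
    intro w hw
    simp only [Finset.mem_erase] at hw ⊢
    refine ⟨fun h => hw.2.1 ?_, fun h => hw.1 ?_, hcl w hw.2.2⟩
    · rw [← hσ w, h, hσ]
    · rw [← hσ w, h]
  have ih' := ih _ (by omega) ((S.erase v).erase (σ v)) rfl hcl'
  rw [hp]
  have hfilt : ((S.erase v).erase (σ v)).filter isU = ((S.filter isU).erase v).erase (σ v) := by
    ext w; simp only [Finset.mem_filter, Finset.mem_erase]; tauto
  rw [hfilt] at ih'
  by_cases hu : isU v
  · refine Ideal.mul_mem_left _ _ (ih' s ?_)
    have h1 := Finset.card_erase_add_one (Finset.mem_filter.2 ⟨hv, hu⟩)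
    have h2 := Finset.card_erase_le (s := (S.filter isU).erase v) (a := σ v)
    omega
  by_cases hu' : isU (σ v)
  · refine Ideal.mul_mem_left _ _ (ih' s ?_)
    have h1 := Finset.card_erase_add_one (Finset.mem_filter.2 ⟨hcl v hv, hu'⟩)
    have h2 : (S.filter isU).erase v = S.filter isU := Finset.erase_eq_of_notMem (by simp [hu])
    rw [h2]
    omega
  rcases s with _ | s
  · simp
  rw [pow_succ']
  refine Ideal.mul_mem_mul (hI v hu hu') (ih' s ?_)
  have h2 : (S.filter isU).erase v = S.filter isU := Finset.erase_eq_of_notMem (by simp [hu])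
  have h3 : (S.filter isU).erase (σ v) = S.filter isU :=
    Finset.erase_eq_of_notMem (by simp [hu'])
  rw [h2, h3]
  omega

/-- Projection of the blow-up (with extra universal vertices) to the base graph. -/
def blowProj {V : Type*} (a : V → ℕ) (d : ℕ) : ((Σ i, Fin (a i)) ⊕ Fin d) → Option V
  | Sum.inl x => some x.1
  | Sum.inr _ => none

/-- Blow-up of a graph along multiplicities `a`, with `d` universal vertices added. -/
def blowGraph {V : Type*} (G : SimpleGraph V) (a : V → ℕ) (d : ℕ) :
    SimpleGraph ((Σ i, Fin (a i)) ⊕ Fin d) where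
  Adj x y := x ≠ y ∧ ∀ i j, blowProj a d x = some i → blowProj a d y = some j → G.Adj i j
  symm := ⟨fun _ _ h => ⟨h.1.symm, fun i j hi hj => (h.2 j i hj hi).symm⟩⟩
  loopless := ⟨fun _ h => h.1 rfl⟩

lemma monomial_mem_edgeIdeal_pow {k : Type*} [Field k] {V : Type*} [Fintype V]
    (G : SimpleGraph V)
    (hP : ∀ v : V, ∃ f : V → Bool, ∀ w w', ¬ G.Adj v w → ¬ G.Adj v w' →
      f w = f w' → ¬ G.Adj w w') (a : V →₀ ℕ) (t : ℕ) (hN : 2 * t ≤ ∑ i, a i)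
    (hcov : ∀ C : Finset V, IsVertexCover G C → t ≤ ∑ i ∈ C, a i) :
    monomial a (1 : k) ∈ edgeIdeal k G ^ t := by
  classical
  rcases Nat.eq_zero_or_pos t with rfl | htpos
  · simp
  obtain ⟨d, hd⟩ := Nat.exists_eq_add_of_le hN
  set H := blowGraph G a d with hH
  have hcard : Fintype.card ((Σ i, Fin (a i)) ⊕ Fin d) = 2 * (t + d) := by
    simp [Fintype.card_sigma]; omega
  obtain ⟨M, hM⟩ := tutte_cover H (by rw [hcard]; exact even_two_mul _) (by
    rintro (⟨i, x⟩ | u)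
    · obtain ⟨f, hf⟩ := hP i
      refine ⟨fun w => (blowProj a d w).elim true f, ?_⟩
      rintro (⟨j, y⟩ | u) (⟨l, z⟩ | u') hw hw' h1 h2 he h3
      · simp only [hH, blowGraph, blowProj] at h1 h2 h3 he
        refine hf j l (fun h => h1 ⟨hw.symm, ?_⟩) (fun h => h2 ⟨hw'.symm, ?_⟩) (by simpa using he)
          (h3.2 _ _ rfl rfl)
        · rintro _ _ ⟨⟩ ⟨⟩; exact h
        · rintro _ _ ⟨⟩ ⟨⟩; exact h
      · exact h2 ⟨hw'.symm, by simp [blowProj]⟩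
      · exact h1 ⟨hw.symm, by simp [blowProj]⟩
      · exact h1 ⟨hw.symm, by simp [blowProj]⟩
    · exact ⟨fun _ => true, fun w w' hw _ h => absurd ⟨hw.symm, by simp [blowProj]⟩ h⟩) (by
    intro C hC
    rw [hcard]
    by_cases hall : ∀ u : Fin d, Sum.inr u ∈ C
    · set C0 : Finset V := Finset.univ.filter (fun i => ∀ x : Fin (a i), Sum.inl ⟨i, x⟩ ∈ C)
      have h0 := hcov C0 (by
        intro i j hij
        by_contra hcon
        simp only [C0, Finset.mem_filter, Finset.mem_univ, true_and, not_or, not_forall] at hcon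
        obtain ⟨⟨x, hx⟩, y, hy⟩ := hcon
        rcases hC (Sum.inl ⟨i, x⟩) (Sum.inl ⟨j, y⟩) ⟨by
          intro h
          simp only [Sum.inl.injEq, Sigma.mk.injEq] at h
          exact hij.ne h.1, by
          rintro _ _ ⟨⟩ ⟨⟩; exact hij⟩ with h | h
        · exact hx h
        · exact hy h)
      have hsub : (C0.sigma (fun i => (Finset.univ : Finset (Fin (a i))))).disjSum
          (Finset.univ : Finset (Fin d)) ⊆ C := by
        rintro (⟨i, x⟩ | u) h
        · simp [C0] at h; exact h x
        · exact hall u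
      have := Finset.card_le_card hsub
      rw [Finset.card_disjSum, Finset.card_sigma] at this
      simp at this
      omega
    · push Not at hall
      obtain ⟨u, hu⟩ := hall
      have hsub : Finset.univ.erase (Sum.inr u) ⊆ C := by
        intro w hw
        have hw := (Finset.mem_erase.1 hw).1
        rcases hC (Sum.inr u) w ⟨hw.symm, by simp [blowProj]⟩ with h | h
        · exact absurd h hu
        · exact h
      have := Finset.card_le_card hsub
      rw [Finset.card_erase_of_mem (Finset.mem_univ _), Finset.card_univ, hcard] at this
      omega)
  rw [SimpleGraph.Subgraph.isPerfectMatching_iff] at hM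
  choose σ hσ hu using hM
  have hmem := prod_mem_of_involution
    (fun w => ((blowProj a d w).elim 1 X : MvPolynomial V k)) (fun w => blowProj a d w = none)
    (edgeIdeal k G) σ (fun w => (hu (σ w) w (hσ w).symm).symm) (fun w h => (hσ w).ne h.symm) (by
      intro w h1 h2
      obtain ⟨i, hi⟩ := Option.ne_none_iff_exists'.1 h1
      obtain ⟨j, hj⟩ := Option.ne_none_iff_exists'.1 h2
      have hadj : H.Adj w (σ w) := (hσ w).adj_sub
      refine Ideal.subset_span ⟨i, j, hadj.2 i j hi hj, ?_⟩
      simp [hi, hj]) _ Finset.univ rfl (by simp) t (by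
      rw [Finset.card_univ, hcard]
      have : (Finset.univ.filter (fun w => blowProj a d w = none)) ⊆
          (Finset.univ : Finset (Fin d)).map Function.Embedding.inr := by
        rintro (⟨i, x⟩ | u) h
        · exact absurd (Finset.mem_filter.1 h).2 (by simp [blowProj])
        · simp
      have := Finset.card_le_card this
      simp only [Finset.card_map, Finset.card_univ, Fintype.card_fin] at this
      omega)
  convert hmem using 1
  rw [Fintype.prod_sum_type, Fintype.prod_sigma]
  simp [blowProj, monomial_eq, Finsupp.prod_fintype]

lemma Gnr_split (n r : ℕ) (hn : 2 ≤ n) (v : ZMod n) :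
    ∃ f : ZMod n → Bool, ∀ w w', ¬ (Gnr n r).Adj v w → ¬ (Gnr n r).Adj v w' →
      f w = f w' → ¬ (Gnr n r).Adj w w' := by
  have : NeZero n := ⟨by omega⟩
  refine ⟨fun w => decide ((v.val ≤ w.val ∧ w.val ≤ v.val + r) ∨ w.val + n ≤ v.val + r), ?_⟩
  intro w w' h1 h2 h3 h4
  have hv := v.val_lt
  have hw := w.val_lt
  have hw' := w'.val_lt
  have e1 : v = w ↔ v.val = w.val := (ZMod.val_injective n).eq_iff.symm
  have e2 : v = w' ↔ v.val = w'.val := (ZMod.val_injective n).eq_iff.symm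
  simp only [Gnr, SimpleGraph.fromRel_adj, ne_eq, e1, e2] at h1 h2 h4
  replace h4 := h4.2
  rw [decide_eq_decide] at h3
  generalize v.val = a at *
  generalize w.val = b at *
  generalize w'.val = c at *
  omega

lemma Gnr_edge (n r : ℕ) (hn : 2 ≤ n) (hr : r ≤ n / 2 - 1) :
    ∃ i j, (Gnr n r).Adj i j := by
  have : NeZero n := ⟨by omega⟩
  have h1 : ((r + 1 : ℕ) : ZMod n).val = r + 1 := ZMod.val_natCast_of_lt (by omega)
  refine ⟨0, ((r + 1 : ℕ) : ZMod n), ?_, ?_⟩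
  · intro h
    have := congrArg ZMod.val h
    rw [h1] at this
    simp at this
  · left
    beta_reduce
    rw [h1]
    simp
    omega

lemma exists_minCover {V : Type*} (G : SimpleGraph V) (C : Finset V) (hC : IsVertexCover G C) :
    ∃ D ⊆ C, IsMinVertexCover G D := by
  classical
  induction C using Finset.strongInduction with
  | _ C ih =>
  by_cases h : ∀ D ⊆ C, IsVertexCover G D → D = C
  · exact ⟨C, subset_rfl, hC, h⟩
  · push Not at h
    obtain ⟨D, hD, hDc, hne⟩ := h
    obtain ⟨E, hE, hm⟩ := ih D (hD.ssubset_of_ne hne) hDc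
    exact ⟨E, hE.trans hD, hm⟩

lemma coverPrime_pow_support {k : Type*} [Field k] {V : Type*} (C : Finset V) (t : ℕ) :
    ∀ p ∈ coverPrime k C ^ t, ∀ u ∈ p.support, t ≤ ∑ i ∈ C, u i := by
  classical
  induction t with
  | zero => intros; simp
  | succ t ih =>
    have hup : ∀ s : ℕ, IsUpperSet {u : V →₀ ℕ | s ≤ ∑ i ∈ C, u i} := by
      intro s u v huv hu
      exact le_trans hu (Finset.sum_le_sum fun i _ => huv i)
    have h1 : coverPrime k C ≤ restrictSupportIdeal k {u : V →₀ ℕ | 1 ≤ ∑ i ∈ C, u i} (hup 1) := by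
      rw [coverPrime, Ideal.span_le]
      rintro _ ⟨i, hi, rfl⟩ u hu
      have hu : u ∈ (X i : MvPolynomial V k).support := hu
      rw [support_X, Finset.mem_singleton] at hu
      subst hu
      show 1 ≤ ∑ j ∈ C, (Finsupp.single i 1 : V →₀ ℕ) j
      have hi : i ∈ C := hi
      simp [Finsupp.single_apply, hi]
    have h2 : coverPrime k C ^ (t + 1) ≤
        restrictSupportIdeal k {u : V →₀ ℕ | t + 1 ≤ ∑ i ∈ C, u i} (hup (t + 1)) := by
      rw [pow_succ, Ideal.mul_le]
      intro p hp q hq u hu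
      obtain ⟨x, hx, y, hy, rfl⟩ := Finset.mem_add.1 (support_mul p q hu)
      have e1 := ih p hp x hx
      have e2 : 1 ≤ ∑ i ∈ C, y i := h1 hq hy
      show t + 1 ≤ ∑ i ∈ C, (x + y) i
      simp only [Finsupp.add_apply, Finset.sum_add_distrib]
      omega
    intro p hp u hu
    exact h2 hp hu

lemma edgeIdeal_pow_le_symbPow {k : Type*} [Field k] {V : Type*} (G : SimpleGraph V) (t : ℕ) :
    edgeIdeal k G ^ t ≤ symbPow k G t := by
  refine le_iInf fun C => le_iInf fun hC => Ideal.pow_right_mono ?_ t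
  rw [edgeIdeal, Ideal.span_le]
  rintro _ ⟨i, j, hij, rfl⟩
  rcases hC.1 hij with h | h
  · exact Ideal.mul_mem_right _ _ (Ideal.subset_span ⟨i, h, rfl⟩)
  · exact Ideal.mul_mem_left _ _ (Ideal.subset_span ⟨j, h, rfl⟩)

lemma mem_edgePow_of_mem_symbPow {k : Type*} [Field k] {V : Type*} [Fintype V]
    (G : SimpleGraph V)
    (hP : ∀ v : V, ∃ f : V → Bool, ∀ w w', ¬ G.Adj v w → ¬ G.Adj v w' →
      f w = f w' → ¬ G.Adj w w') (t m : ℕ) (hm : 2 * t ≤ m) (p : MvPolynomial V k)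
    (hp : p ∈ symbPow k G t) (hpm : p.IsHomogeneous m) : p ∈ edgeIdeal k G ^ t := by
  rw [p.as_sum]
  refine Ideal.sum_mem _ fun u hu => ?_
  have : monomial u (coeff u p) = C (coeff u p) * monomial u 1 := by
    rw [C_mul_monomial, mul_one]
  rw [this]
  refine Ideal.mul_mem_left _ _ (monomial_mem_edgeIdeal_pow G hP u t ?_ ?_)
  · have := hpm (mem_support_iff.1 hu)
    rw [Pi.one_def, ← Finsupp.degree_eq_weight_one, Finsupp.degree_eq_sum] at this
    omega
  · intro C hC
    obtain ⟨D, hD, hDm⟩ := exists_minCover G C hC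
    have hpD : p ∈ coverPrime k D ^ t := by
      have := hp
      simp only [symbPow, Submodule.mem_iInf] at this
      exact this D hDm
    exact (coverPrime_pow_support D t p hpD u hu).trans
      (Finset.sum_le_sum_of_subset hD)

attribute [local instance] MvPolynomial.gradedAlgebra

lemma homog_pow {k : Type*} [Field k] {V : Type*} {I : Ideal (MvPolynomial V k)}
    (hI : I.IsHomogeneous (homogeneousSubmodule V k)) (t : ℕ) :
    (I ^ t).IsHomogeneous (homogeneousSubmodule V k) := by
  induction t with
  | zero => rw [pow_zero, Ideal.one_eq_top]; exact Ideal.IsHomogeneous.top _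
  | succ t ih => rw [pow_succ]; exact ih.mul hI

lemma homog_component {k : Type*} [Field k] {V : Type*} {I : Ideal (MvPolynomial V k)}
    (hI : I.IsHomogeneous (homogeneousSubmodule V k)) {p : MvPolynomial V k} (hp : p ∈ I)
    (d : ℕ) : homogeneousComponent d p ∈ I :=
  (mem_iff_homogeneousComponent_mem hI p).1 hp d

lemma edgeIdeal_homog {k : Type*} [Field k] {V : Type*} (G : SimpleGraph V) :
    (edgeIdeal k G).IsHomogeneous (homogeneousSubmodule V k) := by
  refine Ideal.homogeneous_span _ _ ?_
  rintro _ ⟨i, j, _, rfl⟩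
  exact ⟨2, (isHomogeneous_X k i).mul (isHomogeneous_X k j)⟩

lemma symbPow_homog {k : Type*} [Field k] {V : Type*} (G : SimpleGraph V) (t : ℕ) :
    (symbPow k G t).IsHomogeneous (homogeneousSubmodule V k) := by
  refine Ideal.IsHomogeneous.iInf₂ fun C _ => homog_pow (Ideal.homogeneous_span _ _ ?_) t
  rintro _ ⟨i, _, rfl⟩
  exact ⟨1, isHomogeneous_X k i⟩

lemma edgePow_gen {k : Type*} [Field k] {V : Type*} (G : SimpleGraph V) (t : ℕ) :
    edgeIdeal k G ^ t ≤ Ideal.span {p | p ∈ edgeIdeal k G ^ t ∧ p.totalDegree ≤ 2 * t} := by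
  induction t with
  | zero =>
    rw [pow_zero, Ideal.one_eq_top]
    refine le_of_eq (Eq.symm ((Ideal.eq_top_iff_one _).2 (Ideal.subset_span ?_)))
    simp
  | succ t ih =>
    conv_lhs => rw [pow_succ]
    refine (Ideal.mul_mono_left ih).trans ?_
    conv_lhs => rw [edgeIdeal]
    rw [Ideal.span_mul_span', Ideal.span_le]
    rintro _ ⟨p, ⟨hp, hpd⟩, _, ⟨i, j, hij, rfl⟩, rfl⟩
    refine Ideal.subset_span ⟨?_, ?_⟩
    · rw [pow_succ]
      exact Ideal.mul_mem_mul hp (Ideal.subset_span ⟨i, j, hij, rfl⟩)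
    · refine (totalDegree_mul _ _).trans ?_
      have := totalDegree_mul (X i : MvPolynomial V k) (X j)
      rw [totalDegree_X, totalDegree_X] at this
      omega

/-- Any ideal between `I^t` and `I^{(t)}` that is `m`-regular has `m ≥ 2t`. -/
lemma le_of_isMRegular {k : Type*} [Field k] {V : Type*} [Fintype V] (G : SimpleGraph V)
    (i j : V) (hij : G.Adj i j) (t m : ℕ) (J : Ideal (MvPolynomial V k))
    (h1 : edgeIdeal k G ^ t ≤ J) (h2 : J ≤ symbPow k G t)
    (hgen : Ideal.span {p | p ∈ J ∧ p.totalDegree ≤ m} = J) : 2 * t ≤ m := by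
  classical
  by_contra hlt
  set e : V →₀ ℕ := Finsupp.single i t + Finsupp.single j t with he
  have hup : IsUpperSet {u : V →₀ ℕ | ¬ u ≤ e} := fun u v huv hu hv => hu (huv.trans hv)
  have key : ∀ i j, G.Adj i j → e = Finsupp.single i t + Finsupp.single j t →
      ∀ p ∈ J, ∀ u ∈ p.support, u ≤ e → t ≤ u i := by
    intro i j hij he p hp u hu hue
    obtain ⟨D, hD, hDm⟩ := exists_minCover G (Finset.univ.erase j) (by
      intro a b hab
      by_cases h : a = j
      · right; simp; rintro rfl; exact hab.ne h
      · left; simp [h])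
    have hpD : p ∈ coverPrime k D ^ t := by
      have := h2 hp
      simp only [symbPow, Submodule.mem_iInf] at this
      exact this D hDm
    have h3 := coverPrime_pow_support D t p hpD u hu
    have hjD : j ∉ D := fun h => by simpa using hD h
    have hz : ∀ l ∈ D, l ≠ i → u l = 0 := by
      intro l hl hli
      have hlj : l ≠ j := fun h => hjD (h ▸ hl)
      have := hue l
      simpa [he, Finsupp.single_apply, hli.symm, hlj.symm] using this
    refine h3.trans ?_
    by_cases hiD : i ∈ D
    · rw [Finset.sum_eq_single_of_mem i hiD hz]
    · rw [Finset.sum_eq_zero fun l hl => hz l hl fun h => hiD (h ▸ hl)]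
      exact Nat.zero_le _
  have hle : J ≤ restrictSupportIdeal k {u : V →₀ ℕ | ¬ u ≤ e} hup := by
    rw [← hgen, Ideal.span_le]
    rintro p ⟨hp, hpd⟩ u hu hue
    have a1 := key i j hij he p hp u hu hue
    have a2 := key j i hij.symm (by rw [he, add_comm]) p hp u hu hue
    have a3 := (le_totalDegree hu).trans hpd
    have a4 : u i + u j ≤ u.sum fun _ e => e := by
      rw [Finsupp.sum_fintype _ _ (by simp), ← Finset.sum_pair hij.ne]
      exact Finset.sum_le_sum_of_subset (Finset.subset_univ _)
    omega
  have hmem : monomial e (1 : k) ∈ J := by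
    apply h1
    have : monomial e (1 : k) = (X i * X j) ^ t := by
      rw [mul_pow, X_pow_eq_monomial, X_pow_eq_monomial, monomial_mul, mul_one]
    rw [this]
    have hX : (X i * X j : MvPolynomial V k) ∈ edgeIdeal k G :=
      Ideal.subset_span ⟨i, j, hij, rfl⟩
    exact Ideal.pow_mem_pow hX t
  have := hle hmem (show e ∈ (monomial e (1 : k)).support by simp)
  exact this le_rfl

lemma mem_sup_of_homog {k : Type*} [Field k] {V : Type*} {J J' H : Ideal (MvPolynomial V k)}
    {s : ℕ} (hJ' : J'.IsHomogeneous (homogeneousSubmodule V k))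
    (hH : H.IsHomogeneous (homogeneousSubmodule V k))
    (hdeg : ∀ m, s ≤ m → ∀ p ∈ J', p.IsHomogeneous m → p ∈ J) (m : ℕ) (hm : s ≤ m)
    (p : MvPolynomial V k) (hp : p.IsHomogeneous m) (hpm : p ∈ J' ⊔ H) : p ∈ J ⊔ H := by
  obtain ⟨a, ha, b, hb, rfl⟩ := Submodule.mem_sup.1 hpm
  have h1 := homogeneousComponent_of_mem (m := m) hp
  rw [if_pos rfl, map_add] at h1
  rw [← h1]
  exact Submodule.add_mem_sup
    (hdeg m hm _ (homog_component hJ' ha m) (homogeneousComponent_isHomogeneous m a))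
    (homog_component hH hb m)

lemma isMRegular_iff {k : Type*} [Field k] {V : Type*} {J J' : Ideal (MvPolynomial V k)}
    {s : ℕ} (hJ' : J'.IsHomogeneous (homogeneousSubmodule V k)) (hle : J ≤ J')
    (hdeg : ∀ m, s ≤ m → ∀ p ∈ J', p.IsHomogeneous m → p ∈ J)
    (hgen : J ≤ Ideal.span {p | p ∈ J ∧ p.totalDegree ≤ s}) (m : ℕ) (hm : s ≤ m) :
    IsMRegular J' m ↔ IsMRegular J m := by
  have g1 : Ideal.span {p | p ∈ J ∧ p.totalDegree ≤ m} = J := by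
    refine le_antisymm (Ideal.span_le.2 fun p hp => hp.1) (hgen.trans (Ideal.span_mono ?_))
    exact fun p hp => ⟨hp.1, hp.2.trans hm⟩
  have g2 : Ideal.span {p | p ∈ J' ∧ p.totalDegree ≤ m} = J' := by
    refine le_antisymm (Ideal.span_le.2 fun p hp => hp.1) fun p hp => ?_
    rw [← sum_homogeneousComponent p]
    refine Ideal.sum_mem _ fun d _ => ?_
    have hd := homog_component hJ' hp d
    by_cases hdm : d ≤ m
    · exact Ideal.subset_span
        ⟨hd, (homogeneousComponent_isHomogeneous d p).totalDegree_le.trans hdm⟩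
    · have := hdeg d (by omega) _ hd (homogeneousComponent_isHomogeneous d p)
      rw [← g1] at this
      have hsub : {q | q ∈ J ∧ q.totalDegree ≤ m} ⊆ {q | q ∈ J' ∧ q.totalDegree ≤ m} :=
        fun q hq => ⟨hle hq.1, hq.2⟩
      exact Ideal.span_mono hsub this
  have piece : ∀ (S : Set (MvPolynomial V k)), (∀ x ∈ S, x ∈ homogeneousSubmodule V k 1) →
      ∀ (d : ℕ), s ≤ d → ∀ p : MvPolynomial V k, p.IsHomogeneous d →
        (p ∈ J' ⊔ Ideal.span S ↔ p ∈ J ⊔ Ideal.span S) := by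
    intro S hS d hd p hp
    refine ⟨fun h => mem_sup_of_homog hJ' (Ideal.homogeneous_span _ _ fun x hx => ⟨1, hS x hx⟩)
      hdeg d hd p hp h, fun h => sup_le_sup_right hle _ h⟩
  unfold IsMRegular
  rw [g1, g2]
  simp only [true_and]
  refine exists_congr fun ℓ => exists_congr fun h => and_congr_right fun hh => ?_
  have q1 : ∀ (S : Set (MvPolynomial V k)), (∀ x ∈ S, x ∈ homogeneousSubmodule V k 1) →
      gradedPiece (J' ⊔ Ideal.span S) m = gradedPiece (J ⊔ Ideal.span S) m := by
    intro S hS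
    ext p
    simp only [gradedPiece, Submodule.mem_inf, Submodule.restrictScalars_mem]
    exact and_congr_left fun hp => piece S hS m hm p hp
  have q2 : ∀ (S : Set (MvPolynomial V k)), (∀ x ∈ S, x ∈ homogeneousSubmodule V k 1) →
      ∀ y ∈ homogeneousSubmodule V k 1,
      gradedPiece (Submodule.colon (J' ⊔ Ideal.span S) (Ideal.span {y})) m =
        gradedPiece (Submodule.colon (J ⊔ Ideal.span S) (Ideal.span {y})) m := by
    intro S hS y hy
    ext p
    simp only [gradedPiece, Submodule.mem_inf, Submodule.restrictScalars_mem,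
      Ideal.mem_colon_span_singleton]
    refine and_congr_left fun hp => piece S hS (m + 1) (by omega) _ ?_
    exact IsHomogeneous.mul hp hy
  have hS : ∀ i : Fin ℓ, ∀ x ∈ h '' {x | x < i}, x ∈ homogeneousSubmodule V k 1 := by
    rintro i _ ⟨x, _, rfl⟩; exact hh x
  refine and_congr (forall_congr' fun i => ?_) ?_
  · rw [q2 _ (hS i) _ (hh i), q1 _ (hS i)]
  · rw [q1 _ (by rintro _ ⟨x, rfl⟩; exact hh x)]

/-- For the edge ideal `I = I(G_{n,r})`, the Castelnuovo–Mumford regularity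
of the `t`-th symbolic power equals that of the `t`-th ordinary power, for all `t ≥ 1`. -/
theorem stmt17 {k : Type*} [Field k] (n r : ℕ) (hn : 2 ≤ n) (hr : r ≤ n / 2 - 1)
    (t : ℕ) (ht : 1 ≤ t) :
    reg (symbPow k (Gnr n r) t) = reg ((edgeIdeal k (Gnr n r)) ^ t) := by
  have : NeZero n := ⟨by omega⟩
  obtain ⟨i, j, hij⟩ := Gnr_edge n r hn hr
  have hle := edgeIdeal_pow_le_symbPow (k := k) (Gnr n r) t
  unfold reg
  congr 1
  ext m
  have hiff := fun hm => isMRegular_iff (symbPow_homog (k := k) (Gnr n r) t) hle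
    (fun m hm p hp hpm => mem_edgePow_of_mem_symbPow (Gnr n r) (Gnr_split n r hn) t m hm p hp hpm)
    (edgePow_gen (Gnr n r) t) m hm
  constructor
  · intro h
    exact (hiff (le_of_isMRegular _ i j hij t m _ hle le_rfl h.1)).1 h
  · intro h
    exact (hiff (le_of_isMRegular _ i j hij t m _ le_rfl hle h.1)).2 h
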